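/- For every caterpillar T on n vertices, h(T) ≥ n/6 − 1. (The paper states h(T) ≥ n/6 with floors and ceilings omitted.) -/

import Mathlib

open Finset

/-- The multiset of pairwise distances between distinct vertices of `S` in `G`
(one entry for each unordered pair of distinct vertices of `S`). -/
noncomputable def distMultiset {V : Type*} (G : SimpleGraph V) (S : Finset V) : Multiset ℕ :=
  letI := Classical.decEq V
  (S.sym2.filter fun p => ¬ p.IsDiag).val.map
    (Sym2.lift ⟨fun a b => G.dist a b, fun _ _ => SimpleGraph.dist_comm⟩)

/-- Two disjoint vertex sets are homometric if their distance multisets coincide. -/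
def Homometric {V : Type*} (G : SimpleGraph V) (S₁ S₂ : Finset V) : Prop :=
  Disjoint S₁ S₂ ∧ distMultiset G S₁ = distMultiset G S₂

/-- `h(G)`: the largest `h` such that `G` contains two disjoint homometric sets of
size `h` each. -/
noncomputable def homNumber {V : Type*} (G : SimpleGraph V) : ℕ :=
  sSup {h : ℕ | ∃ S₁ S₂ : Finset V, Homometric G S₁ S₂ ∧ S₁.card = h ∧ S₂.card = h}

/-- A caterpillar: a tree containing a path (the spine) such that every vertex not on
the spine is a leaf adjacent to a spine vertex. -/
def IsCaterpillar {V : Type*} [Fintype V] (G : SimpleGraph V) [DecidableRel G.Adj] : Prop :=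
  G.IsTree ∧ ∃ (a b : V) (p : G.Walk a b), p.IsPath ∧
    ∀ v, v ∉ p.support → G.degree v = 1 ∧ ∃ x ∈ p.support, G.Adj v x

/-!
Let `s` be the number of spine vertices. A tree path is a geodesic, so cutting the spine in the
middle gives two halves that are translates of each other, and `h ≥ ⌊s / 2⌋`.

On the other hand, a walk of positive length keeps its length when an endpoint is replaced by a
vertex with the same neighbourhood. Pairing up vertices with equal neighbourhoods, at most one per
neighbourhood being left over, therefore gives `n ≤ 2 h + N`, where `N` is the number of distinct
neighbourhoods. The neighbourhood of a vertex off the spine is a single spine vertex, so `N ≤ 2 s`.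
Since `s ≤ 2 h + 1`, it follows that `n ≤ 6 h + 2`.
-/

section Pairing

lemma exists_disjoint_embeddings_half (α : Type*) [Finite α] :
    ∃ u v : Fin (Nat.card α / 2) ↪ α, ∀ i j, u i ≠ v j := by
  let e : Fin (Nat.card α) ↪ α := (Finite.equivFin α).symm.toEmbedding
  refine ⟨(Fin.castLEEmb (by omega)).trans e,
    ⟨fun i => e ⟨i + Nat.card α / 2, by omega⟩, fun i j hij => ?_⟩, fun i j hij => ?_⟩
  · simpa [Fin.ext_iff] using e.injective hij
  · have : (i : ℕ) = j + Nat.card α / 2 := Fin.ext_iff.1 (e.injective hij)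
    omega

lemma exists_disjoint_embeddings_apply_eq {α β : Type*} [Finite α] [Finite β] (g : α → β) :
    ∃ (m : ℕ) (u v : Fin m ↪ α), (∀ i j, u i ≠ v j) ∧ (∀ i, g (u i) = g (v i)) ∧
      Nat.card α ≤ 2 * m + Nat.card β := by
  have := Fintype.ofFinite β
  choose u v hne using fun b => exists_disjoint_embeddings_half {a // g a = b}
  let ι := Σ b, Fin (Nat.card {a // g a = b} / 2)
  let glue (w : ∀ b, Fin (Nat.card {a // g a = b} / 2) ↪ {a // g a = b}) : ι ↪ α :=
    (Function.Embedding.sigmaMap (.refl β) w).trans (Equiv.sigmaFiberEquiv g).toEmbedding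
  have g_glue (w) (i : ι) : g (glue w i) = i.1 := (w i.1 i.2).2
  let e : Fin (Fintype.card ι) ↪ ι := (Fintype.equivFin ι).symm.toEmbedding
  have glue_ne (i j : ι) : glue u i ≠ glue v j := fun hij => by
    obtain ⟨b, i⟩ := i
    obtain ⟨c, j⟩ := j
    obtain rfl : b = c := by simpa only [g_glue] using congrArg g hij
    exact hne b i j (Subtype.ext hij)
  refine ⟨Fintype.card ι, e.trans (glue u), e.trans (glue v), fun i j => glue_ne _ _,
    fun i => (g_glue u _).trans (g_glue v _).symm, ?_⟩
  calc Nat.card α = ∑ b, Nat.card {a // g a = b} := by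
        rw [← Nat.card_congr (Equiv.sigmaFiberEquiv g), Nat.card_sigma]
    _ ≤ ∑ b, (2 * (Nat.card {a // g a = b} / 2) + 1) := sum_le_sum fun b _ => by omega
    _ = 2 * Fintype.card ι + Nat.card β := by
        simp [ι, sum_add_distrib, mul_sum]

end Pairing

section Homometric

variable {V ι : Type*} {G : SimpleGraph V}

lemma distMultiset_map [DecidableEq ι] (s : Finset ι) (u : ι ↪ V) :
    distMultiset G (s.map u) = (s.sym2.filter fun p => ¬ p.IsDiag).val.map
      (Sym2.lift ⟨fun i j => G.dist (u i) (u j), fun _ _ => SimpleGraph.dist_comm⟩) := by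
  classical
  rw [distMultiset, sym2_map, filter_map, map_val, Multiset.map_map]
  refine Multiset.map_congr ?_ fun p _ => ?_
  · congr! 2 with p
    exact not_congr (Sym2.isDiag_map u.injective)
  · induction p with | _ i j => rfl

lemma Homometric.card_le_homNumber [Finite V] {S₁ S₂ : Finset V} (h : Homometric G S₁ S₂)
    (hcard : #S₁ = #S₂) : #S₁ ≤ homNumber G := by
  have := Fintype.ofFinite V
  refine le_csSup ⟨Fintype.card V, ?_⟩ ⟨S₁, S₂, h, rfl, hcard.symm⟩
  rintro _ ⟨S, _, -, rfl, -⟩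
  exact S.card_le_univ

lemma card_le_homNumber_of_dist_eq [Finite V] [Fintype ι] (u v : ι ↪ V)
    (hne : ∀ i j, u i ≠ v j) (hdist : ∀ i j, G.dist (u i) (u j) = G.dist (v i) (v j)) :
    Fintype.card ι ≤ homNumber G := by
  classical
  have hom : Homometric G (univ.map u) (univ.map v) := by
    refine ⟨?_, ?_⟩
    · simpa [disjoint_left] using fun i j => (hne i j).symm
    · simp only [distMultiset_map, hdist]
  simpa using hom.card_le_homNumber (by simp)

end Homometric

section Geodesic

variable {V : Type*} {G : SimpleGraph V} {a b : V} {p : G.Walk a b}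

lemma length_eq_dist_of_isPath (hG : G.IsAcyclic) (hp : p.IsPath) : p.length = G.dist a b := by
  obtain ⟨q, hq, hlen⟩ := p.reachable.exists_path_of_dist
  have : (⟨p, hp⟩ : G.Path a b) = ⟨q, hq⟩ := (hG.subsingleton_path a b).elim _ _
  rw [← hlen, show p = q from congrArg Subtype.val this]

lemma dist_getVert_eq_natDist (hp : p.length = G.dist a b) {i j : ℕ} (hi : i ≤ p.length)
    (hj : j ≤ p.length) : G.dist (p.getVert i) (p.getVert j) = Nat.dist i j := by
  wlog hij : i ≤ j generalizing i j
  · rw [SimpleGraph.dist_comm, Nat.dist_comm, this hj hi (le_of_not_ge hij)]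
  have hsub : ((p.drop i).take (j - i)).IsSubwalk p :=
    ((p.drop i).isSubwalk_take _).trans (p.isSubwalk_drop i)
  have hlen := SimpleGraph.length_eq_dist_of_subwalk hp hsub
  have hend : (p.drop i).getVert (j - i) = p.getVert j := by
    rw [SimpleGraph.Walk.drop_getVert, Nat.add_sub_cancel' hij]
  calc G.dist (p.getVert i) (p.getVert j) = ((p.drop i).take (j - i)).length := by rw [hlen, hend]
    _ = min (j - i) (p.length - i) := by
      rw [SimpleGraph.Walk.take_length, SimpleGraph.Walk.drop_length]
    _ = Nat.dist i j := by rw [Nat.dist_eq_sub_of_le hij]; omega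

lemma dist_add_one_div_two_le_homNumber [Finite V] (h : G.Reachable a b) :
    (G.dist a b + 1) / 2 ≤ homNumber G := by
  obtain ⟨p, hpath, hp⟩ := h.exists_path_of_dist
  rw [← hp]
  let k := (p.length + 1) / 2
  have shift_le (i : Fin k) : i + k ≤ p.length := by
    have := i.isLt
    omega
  have getVert_inj {i j : ℕ} (hi : i ≤ p.length) (hj : j ≤ p.length)
      (hij : p.getVert i = p.getVert j) : i = j := hpath.getVert_injOn hi hj hij
  have index_le (i : Fin k) : i ≤ p.length := le_of_add_le_left (shift_le i)
  let u : Fin k ↪ V := ⟨fun i => p.getVert i, fun i j hij =>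
    Fin.ext (getVert_inj (index_le i) (index_le j) hij)⟩
  let v : Fin k ↪ V := ⟨fun i => p.getVert (i + k), fun i j hij =>
    Fin.ext (Nat.add_right_cancel (getVert_inj (shift_le i) (shift_le j) hij))⟩
  have hne (i j : Fin k) : u i ≠ v j := fun hij => by
    have : (i : ℕ) = j + k := getVert_inj (index_le i) (shift_le j) hij
    omega
  have hdist (i j : Fin k) : G.dist (u i) (u j) = G.dist (v i) (v j) := by
    calc G.dist (u i) (u j) = Nat.dist i j := dist_getVert_eq_natDist hp (index_le i) (index_le j)
      _ = Nat.dist (i + k) (j + k) := (Nat.dist_add_add_right _ _ _).symm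
      _ = G.dist (v i) (v j) := (dist_getVert_eq_natDist hp (shift_le i) (shift_le j)).symm
  simpa using card_le_homNumber_of_dist_eq u v hne hdist

end Geodesic

section Twins

variable {V : Type*} {G : SimpleGraph V} {a a' b b' : V}

lemma exists_walk_length_eq_of_neighborSet_subset (ha : G.neighborSet a ⊆ G.neighborSet a')
    (p : G.Walk a b) (hp : p.length ≠ 0) : ∃ q : G.Walk a' b, q.length = p.length := by
  cases p with
  | nil => exact absurd rfl hp
  | cons h p => exact ⟨.cons (ha h) p, rfl⟩

lemma edist_le_of_neighborSet_subset (ha : G.neighborSet a ⊆ G.neighborSet a')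
    (hb : G.neighborSet b ⊆ G.neighborSet b') (hab : a ≠ b) : G.edist a' b' ≤ G.edist a b := by
  refine le_iInf fun p => ?_
  have hp : p.length ≠ 0 := fun h => hab (p.eq_of_length_eq_zero h)
  obtain ⟨q, hq⟩ := exists_walk_length_eq_of_neighborSet_subset ha p hp
  have hq' : q.reverse.length = p.length := by rw [SimpleGraph.Walk.length_reverse, hq]
  obtain ⟨r, hr⟩ := exists_walk_length_eq_of_neighborSet_subset hb q.reverse (hq' ▸ hp)
  calc G.edist a' b' = G.edist b' a' := SimpleGraph.edist_comm
    _ ≤ r.length := r.edist_le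
    _ = p.length := by rw [hr, hq']

lemma dist_eq_of_neighborSet_eq (ha : G.neighborSet a = G.neighborSet a')
    (hb : G.neighborSet b = G.neighborSet b') (hab : a ≠ b) (hab' : a' ≠ b') :
    G.dist a b = G.dist a' b' :=
  congrArg ENat.toNat <| le_antisymm
    (edist_le_of_neighborSet_subset ha.superset hb.superset hab')
    (edist_le_of_neighborSet_subset ha.subset hb.subset hab)

lemma card_le_two_mul_homNumber_add_ncard [Finite V] (G : SimpleGraph V) :
    Nat.card V ≤ 2 * homNumber G + (Set.range G.neighborSet).ncard := by
  obtain ⟨m, u, v, hne, htwin, hcard⟩ :=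
    exists_disjoint_embeddings_apply_eq (Set.rangeFactorization G.neighborSet)
  have htwin (i) : G.neighborSet (u i) = G.neighborSet (v i) := congrArg Subtype.val (htwin i)
  have hdist (i j : Fin m) : G.dist (u i) (u j) = G.dist (v i) (v j) := by
    obtain rfl | hij := eq_or_ne i j
    · simp only [SimpleGraph.dist_self]
    · exact dist_eq_of_neighborSet_eq (htwin i) (htwin j) (u.injective.ne hij) (v.injective.ne hij)
  have hm : m ≤ homNumber G := by simpa using card_le_homNumber_of_dist_eq u v hne hdist
  rw [Nat.card_coe_set_eq] at hcard
  omega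

end Twins

section Caterpillar

variable {V : Type*} {G : SimpleGraph V}

lemma ncard_range_neighborSet_le_two_mul_card (S : Finset V)
    (hS : ∀ v ∉ S, ∃ x ∈ S, G.neighborSet v = {x}) :
    (Set.range G.neighborSet).ncard ≤ 2 * #S := by
  classical
  have hsub : Set.range G.neighborSet ⊆ ↑(S.image G.neighborSet ∪ S.image fun x => {x}) := by
    rintro _ ⟨v, rfl⟩
    rw [mem_coe, mem_union, mem_image, mem_image]
    by_cases hv : v ∈ S
    · exact Or.inl ⟨v, hv, rfl⟩
    · obtain ⟨x, hx, hvx⟩ := hS v hv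
      exact Or.inr ⟨x, hx, hvx.symm⟩
  calc (Set.range G.neighborSet).ncard
      ≤ #(S.image G.neighborSet ∪ S.image fun x => {x}) := by
        rw [← Set.ncard_coe_finset]
        exact Set.ncard_le_ncard hsub
    _ ≤ #S + #S := (card_union_le _ _).trans (add_le_add card_image_le card_image_le)
    _ = 2 * #S := (two_mul _).symm

lemma neighborSet_eq_singleton_of_degree_eq_one {v x : V} [Fintype (G.neighborSet v)]
    (hv : G.degree v = 1) (hx : G.Adj v x) : G.neighborSet v = {x} :=
  Set.eq_singleton_iff_unique_mem.2 ⟨hx, fun _ hy =>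
    (SimpleGraph.degree_eq_one_iff_existsUnique_adj.1 hv).unique hy hx⟩

lemma IsCaterpillar.card_le_six_mul_homNumber_add_two [Fintype V] [DecidableRel G.Adj]
    (hG : IsCaterpillar G) : Fintype.card V ≤ 6 * homNumber G + 2 := by
  classical
  obtain ⟨htree, a, b, p, hpath, hleaf⟩ := hG
  have hspine : (p.length + 1) / 2 ≤ homNumber G := by
    rw [length_eq_dist_of_isPath htree.isAcyclic hpath]
    exact dist_add_one_div_two_le_homNumber p.reachable
  have htwins : (Set.range G.neighborSet).ncard ≤ 2 * #p.support.toFinset :=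
    ncard_range_neighborSet_le_two_mul_card _ fun v hv => by
      obtain ⟨hdeg, x, hx, hvx⟩ := hleaf v (mt List.mem_toFinset.2 hv)
      exact ⟨x, List.mem_toFinset.2 hx, neighborSet_eq_singleton_of_degree_eq_one hdeg hvx⟩
  have hsupp : #p.support.toFinset ≤ p.length + 1 :=
    p.support.toFinset_card_le.trans_eq p.length_support
  have hcard := card_le_two_mul_homNumber_add_ncard G
  rw [Nat.card_eq_fintype_card] at hcard
  omega

end Caterpillar

/-- For every caterpillar `T` on `n` vertices, `h(T) ≥ n/6 − 1`. -/
theorem stmt6 {V : Type*} [Fintype V] (G : SimpleGraph V) [DecidableRel G.Adj]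
    (hG : IsCaterpillar G) (n : ℕ) (hn : Fintype.card V = n) :
    (n : ℝ) / 6 - 1 ≤ homNumber G := by
  have hcard : (n : ℝ) ≤ 6 * homNumber G + 2 := by
    exact_mod_cast hn ▸ hG.card_le_six_mul_homNumber_add_two
  linarith
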